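/- Let τ > 0 be real, let P ≥ 1 be an integer, and set ρ = P/τ. Then the tail integral satisfies ‖∫_{2√ρ}^{∞} u^{2P}·e^{−τu²}/(1 + iu²) du‖ ≤ (4ρ)^{P − 1/2}·e^{−4P}/τ. -/

import Mathlib

open Real MeasureTheory

/-!
On `(a, ∞)` with `s - 1 ≤ b * a ^ 2`, the function `-u ^ (s - 1) * exp (-(b * u ^ 2)) / b` has
derivative `(2 - (s - 1) / (b * u ^ 2)) * (u ^ s * exp (-(b * u ^ 2)))`, where the first factor is
at least `1`. Integrating this majorant bounds the Gaussian tail by the value of the primitive at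
`a`. The denominator `1 + i u ^ 2` has real part `1`, so it only decreases the integrand, and the
choice `a ^ 2 = 4 * P / τ`, `s = 2 * P` gives the estimate.
-/

section GaussianTail

open Set Filter Topology

variable {a b : ℝ}

lemma tendsto_rpow_mul_exp_neg_mul_sq_atTop_nhds_zero (hb : 0 < b) (s : ℝ) :
    Tendsto (fun u : ℝ => u ^ s * exp (-(b * u ^ 2))) atTop (𝓝 0) := by
  have exp_decay : Tendsto (fun u : ℝ => exp (-(1 / 2) * u)) atTop (𝓝 0) :=
    tendsto_exp_atBot.comp (tendsto_id.const_mul_atTop_of_neg (by norm_num))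
  simpa only [neg_mul] using
    (rpow_mul_exp_neg_mul_sq_isLittleO_exp_neg hb s).trans_tendsto exp_decay

lemma integrableOn_Ioi_rpow_mul_exp_neg_mul_sq (hb : 0 < b) (ha : 0 < a) (s : ℝ) :
    IntegrableOn (fun u : ℝ => u ^ s * exp (-(b * u ^ 2))) (Ioi a) := by
  refine integrable_of_isBigO_exp_neg one_half_pos (fun u hu => ?_) ?_
  · have hu0 : u ≠ 0 := (ha.trans_le hu).ne'
    exact ((continuousAt_rpow_const u s (.inl hu0)).mul (by fun_prop)).continuousWithinAt
  · simpa only [neg_mul] using (rpow_mul_exp_neg_mul_sq_isLittleO_exp_neg hb s).isBigO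

lemma hasDerivAt_neg_rpow_mul_exp_neg_mul_sq_div (hb : b ≠ 0) (s : ℝ) {u : ℝ} (hu : 0 < u) :
    HasDerivAt (fun u : ℝ => -(u ^ (s - 1) * exp (-(b * u ^ 2)) / b))
      ((2 - (s - 1) / (b * u ^ 2)) * (u ^ s * exp (-(b * u ^ 2)))) u := by
  have hpow : HasDerivAt (fun u : ℝ => u ^ (s - 1)) ((s - 1) * u ^ (s - 1 - 1)) u :=
    hasDerivAt_rpow_const (.inl hu.ne')
  have hexp : HasDerivAt (fun u : ℝ => exp (-(b * u ^ 2)))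
      (exp (-(b * u ^ 2)) * -(b * (2 * u))) u := by
    simpa using ((hasDerivAt_pow 2 u).const_mul b).neg.exp
  refine ((hpow.mul hexp).div_const b).neg.congr_deriv ?_
  rw [rpow_sub_one hu.ne', rpow_sub_one hu.ne']
  field_simp
  ring

theorem integral_Ioi_rpow_mul_exp_neg_mul_sq_le (hb : 0 < b) (ha : 0 < a) {s : ℝ}
    (hs : s - 1 ≤ b * a ^ 2) :
    ∫ u in Ioi a, u ^ s * exp (-(b * u ^ 2)) ≤ a ^ (s - 1) * exp (-(b * a ^ 2)) / b := by
  set f : ℝ → ℝ := fun u => u ^ s * exp (-(b * u ^ 2))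
  set g : ℝ → ℝ := fun u => (2 - (s - 1) / (b * u ^ 2)) * f u
  have f_nonneg : ∀ u ∈ Ioi a, 0 ≤ f u := fun u hu =>
    mul_nonneg (rpow_nonneg (ha.trans hu).le s) (exp_nonneg _)
  have f_le_g : ∀ u ∈ Ioi a, f u ≤ g u := fun u hu => by
    have hu0 : 0 < u := ha.trans hu
    have hau : a ^ 2 ≤ u ^ 2 := pow_le_pow_left₀ ha.le (le_of_lt hu) 2
    have hratio : (s - 1) / (b * u ^ 2) ≤ 1 :=
      (div_le_one (by positivity)).2 (hs.trans (mul_le_mul_of_nonneg_left hau hb.le))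
    exact le_mul_of_one_le_left (f_nonneg u hu) (by linarith)
  have g_nonneg : ∀ u ∈ Ioi a, 0 ≤ g u := fun u hu => (f_nonneg u hu).trans (f_le_g u hu)
  have primitive_deriv : ∀ u ∈ Ici a,
      HasDerivAt (fun u : ℝ => -(u ^ (s - 1) * exp (-(b * u ^ 2)) / b)) (g u) u := fun u hu =>
    hasDerivAt_neg_rpow_mul_exp_neg_mul_sq_div hb.ne' s (ha.trans_le hu)
  have primitive_tendsto :
      Tendsto (fun u : ℝ => -(u ^ (s - 1) * exp (-(b * u ^ 2)) / b)) atTop (𝓝 0) := by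
    simpa using
      ((tendsto_rpow_mul_exp_neg_mul_sq_atTop_nhds_zero hb (s - 1)).div_const b).neg
  calc ∫ u in Ioi a, f u
      ≤ ∫ u in Ioi a, g u :=
        setIntegral_mono_on (integrableOn_Ioi_rpow_mul_exp_neg_mul_sq hb ha s)
          (integrableOn_Ioi_deriv_of_nonneg' primitive_deriv g_nonneg primitive_tendsto)
          measurableSet_Ioi f_le_g
    _ = a ^ (s - 1) * exp (-(b * a ^ 2)) / b := by
        rw [integral_Ioi_of_hasDerivAt_of_nonneg' primitive_deriv g_nonneg primitive_tendsto,
          zero_sub, neg_neg]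

end GaussianTail

lemma one_le_norm_one_add_I_mul_ofReal (x : ℝ) : 1 ≤ ‖1 + Complex.I * (x : ℂ)‖ := by
  simpa using Complex.re_le_norm (1 + Complex.I * (x : ℂ))

theorem norm_integral_Ioi_rpow_mul_exp_neg_mul_sq_div_one_add_I_mul_sq_le {a b s : ℝ}
    (hb : 0 < b) (ha : 0 < a) (hs : s - 1 ≤ b * a ^ 2) :
    ‖∫ u in Set.Ioi a, ((u ^ s * exp (-(b * u ^ 2)) : ℝ) : ℂ) / (1 + Complex.I * (u : ℂ) ^ 2)‖
      ≤ a ^ (s - 1) * exp (-(b * a ^ 2)) / b := by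
  refine (norm_integral_le_of_norm_le (integrableOn_Ioi_rpow_mul_exp_neg_mul_sq hb ha s) ?_).trans
    (integral_Ioi_rpow_mul_exp_neg_mul_sq_le hb ha hs)
  refine ae_restrict_of_forall_mem measurableSet_Ioi fun u hu => ?_
  have hnum : 0 ≤ u ^ s * exp (-(b * u ^ 2)) :=
    mul_nonneg (rpow_nonneg (ha.trans hu).le s) (exp_nonneg _)
  have hden : 1 ≤ ‖1 + Complex.I * (u : ℂ) ^ 2‖ := by
    rw [← Complex.ofReal_pow]
    exact one_le_norm_one_add_I_mul_ofReal _
  rw [norm_div, Complex.norm_of_nonneg hnum]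
  exact div_le_self hnum hden

theorem stmt16_general (τ : ℝ) (hτ : 0 < τ) (P : ℝ) (hP : 0 < P) (ρ : ℝ) (hρ : ρ = P / τ) :
    ‖∫ u in Set.Ioi (2 * √ρ),
        ((u ^ (2 * P) * exp (-(τ * u ^ 2)) : ℝ) : ℂ) / (1 + Complex.I * (u : ℂ) ^ 2)‖
      ≤ (4 * ρ) ^ (P - 1 / 2) * exp (-(4 * P)) / τ := by
  have ρ_pos : 0 < ρ := hρ ▸ div_pos hP hτ
  have endpoint_pos : 0 < 2 * √ρ := by positivity
  have endpoint_eq : 2 * √ρ = √(4 * ρ) := by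
    rw [sqrt_mul zero_le_four, show (4 : ℝ) = 2 ^ 2 by norm_num, sqrt_sq zero_le_two]
  have exponent_eq : τ * (2 * √ρ) ^ 2 = 4 * P := by
    rw [mul_pow, sq_sqrt ρ_pos.le, hρ]
    field_simp
    norm_num
  have power_eq : (2 * √ρ) ^ (2 * P - 1) = (4 * ρ) ^ (P - 1 / 2) := by
    rw [endpoint_eq, ← rpow_div_two_eq_sqrt _ (by positivity), sub_div,
      mul_div_cancel_left₀ P two_ne_zero]
  rw [← power_eq, ← exponent_eq]
  exact norm_integral_Ioi_rpow_mul_exp_neg_mul_sq_div_one_add_I_mul_sq_le hτ endpoint_pos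
    (by linarith)

/-- The estimate for the second integral in eq. (139) of the paper: the
contribution of the tail `u ≥ 2√ρ` beyond twice the saddle `u = √(P/τ)` is
exponentially small. -/
theorem stmt16 (τ : ℝ) (hτ : 0 < τ) (P : ℕ) (hP : 1 ≤ P)
    (ρ : ℝ) (hρ : ρ = (P : ℝ) / τ) :
    ‖∫ u in Set.Ioi (2 * Real.sqrt ρ),
          ((u ^ (2 * P) * Real.exp (-(τ * u ^ 2)) : ℝ) : ℂ)
            / (1 + Complex.I * ((u : ℝ) : ℂ) ^ 2)‖
      ≤ (4 * ρ) ^ ((P : ℝ) - 1/2) * Real.exp (-(4 * (P : ℝ))) / τ := by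
  exact_mod_cast stmt16_general τ hτ P (Nat.cast_pos.2 hP) ρ hρ
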